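/- Let P be the R-measure. For every n ≥ 3, letting ℓ(n) be the unique natural number with 3^{ℓ(n)} ≤ n < 3^{ℓ(n)+1}, the n-th quantization error of P is V_n(P) = (1/2) · (1/27^{ℓ(n)+1}) · (13·3^{ℓ(n)} − 4n). -/

import Mathlib

open MeasureTheory ENNReal

noncomputable section

abbrev E2 : Type := EuclideanSpace ℝ (Fin 2)

/-- The point (a, b) of the Euclidean plane. -/
def pt (a b : ℝ) : E2 := (WithLp.equiv 2 (Fin 2 → ℝ)).symm ![a, b]

/-- S₁(x) = x/3. -/
def S1 : E2 → E2 := fun x => (3 : ℝ)⁻¹ • x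

/-- S₂(x) = x/3 + (2/3, 0). -/
def S2 : E2 → E2 := fun x => (3 : ℝ)⁻¹ • x + pt (2/3) 0

/-- S₃(x) = x/3 + (1/3, √3/3). -/
def S3 : E2 → E2 := fun x => (3 : ℝ)⁻¹ • x + pt (1/3) (Real.sqrt 3 / 3)

def Smap : Fin 3 → E2 → E2 := ![S1, S2, S3]

/-- For a word ω = ω₁⋯ω_k ∈ {1,2,3}^k, the composition S_ω = S_{ω₁} ∘ ⋯ ∘ S_{ω_k}. -/
def Sword {k : ℕ} (ω : Fin k → Fin 3) : E2 → E2 :=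
  fun x => (List.ofFn fun i => Smap (ω i)).foldr (fun g y => g y) x

/-- The closed triangle with vertices (0,0), (1,0), (1/2, √3/2). -/
def Tri : Set E2 := convexHull ℝ {pt 0 0, pt 1 0, pt (1/2) (Real.sqrt 3 / 2)}

/-- The distortion error ∫ min_{a ∈ α} ‖x − a‖² dμ of a set α of points. -/
def err (μ : Measure E2) (α : Set E2) : ℝ≥0∞ :=
  ∫⁻ x, ⨅ a ∈ α, ENNReal.ofReal (‖x - a‖ ^ 2) ∂μ

/-- The n-th quantization error V_n(μ). -/
def quantErr (μ : Measure E2) (n : ℕ) : ℝ≥0∞ :=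
  ⨅ (α : Set E2) (_ : α.Finite ∧ α.ncard ≤ n), err μ α

/-- α is an optimal set of n-means for μ. -/
def IsOptimal (μ : Measure E2) (n : ℕ) (α : Set E2) : Prop :=
  α.Finite ∧ α.ncard ≤ n ∧ err μ α = quantErr μ n

/-! Each point of a codebook carries a charge in `[0, 1]` which depends only on its position
relative to the triangle. Writing `c` for the centroid, a point `a` which serves the share `f` of
the mass satisfies `2 / 27 * (∫ f - charge a) ≤ ∫ f * (‖x - a‖ ^ 2 - ‖x - c‖ ^ 2)`: near the
centroid this is a covariance estimate, sharpened by one step of self-similarity, and away from it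
the right-hand side is controlled by its values at the vertices. As `∫ ‖x - c‖ ^ 2 = 1 / 6`, summing
over the codebook yields `13 / 54 ≤ distortion + 2 / 27 * (total charge)`.

The distortion is `1 / 27` times the sum of the distortions of the three expanded codebooks, whose
total charge does not exceed that of the original one. So the inequality can be iterated `ℓ` times,
and bounding every charge by `1` gives the lower bound on the quantization error. It is attained:
for `n ≤ 3` by an explicit codebook, and in general by distributing `n` points as evenly as possible
among the three cells, as the asserted value is affine in `n` between successive powers of three. -/

section SelfSimilar

variable {ι X : Type*} [Fintype ι] [MeasurableSpace X] {μ : Measure X} {T : ι → X → X}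

/-- `μ` is the invariant measure of the iterated function system `T` with equal weights. -/
def IsSelfSimilar (μ : Measure X) (T : ι → X → X) : Prop :=
  μ = (Fintype.card ι : ℝ≥0∞)⁻¹ • ∑ i, μ.map (T i)

lemma IsSelfSimilar.integral_eq [Nonempty ι] (hμ : IsSelfSimilar μ T)
    (hT : ∀ i, Measurable (T i)) {F : X → ℝ} (hF : Integrable F μ) :
    ∫ x, F x ∂μ = (Fintype.card ι : ℝ)⁻¹ * ∑ i, ∫ x, F (T i x) ∂μ := by
  have hint : ∀ i ∈ Finset.univ, Integrable F (μ.map (T i)) := by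
    rw [hμ, integrable_smul_measure (by simp) (by simp)] at hF
    exact integrable_finsetSum_measure.1 hF
  calc ∫ x, F x ∂μ
      = ∫ x, F x ∂((Fintype.card ι : ℝ≥0∞)⁻¹ • ∑ i, μ.map (T i)) := congrArg (∫ x, F x ∂·) hμ
    _ = (Fintype.card ι : ℝ)⁻¹ * ∑ i, ∫ x, F x ∂μ.map (T i) := by
      rw [integral_smul_measure, integral_finsetSum_measure hint]
      simp
    _ = (Fintype.card ι : ℝ)⁻¹ * ∑ i, ∫ x, F (T i x) ∂μ := by
      congr! 2 with i hi
      exact integral_map (hT i).aemeasurable (hint i hi).1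

/-- If `g ≥ 0` shrinks under every map, then `∫ arctan g ≤ ∫ arctan (c * g)`, which forces
`g = 0`; this is applied to the negative part `g` of `h`. -/
lemma IsSelfSimilar.ae_nonneg [Nonempty ι] [IsFiniteMeasure μ] (hμ : IsSelfSimilar μ T)
    (hT : ∀ i, Measurable (T i)) {h : X → ℝ} (hm : Measurable h) {c : ℝ} (hc₀ : 0 ≤ c)
    (hc₁ : c < 1) (hh : ∀ i x, c * h x ≤ h (T i x)) : ∀ᵐ x ∂μ, 0 ≤ h x := by
  let g : X → ℝ := fun x => max (-h x) 0
  have hg : Measurable g := hm.neg.max measurable_const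
  have g_nonneg : ∀ x, 0 ≤ g x := fun x => le_max_right _ _
  have g_map_le : ∀ i x, g (T i x) ≤ c * g x := fun i x =>
    max_le (by nlinarith [hh i x, le_max_left (-h x) 0]) (mul_nonneg hc₀ (g_nonneg x))
  have integrable_arctan {u : X → ℝ} (hu : Measurable u) :
      Integrable (fun x => Real.arctan (u x)) μ :=
    .of_bound hu.arctan.aestronglyMeasurable (Real.pi / 2)
      (.of_forall fun x => abs_le.2
        ⟨(Real.neg_pi_div_two_lt_arctan _).le, (Real.arctan_lt_pi_div_two _).le⟩)
  have arctan_le : ∀ x, 0 ≤ Real.arctan (g x) - Real.arctan (c * g x) := fun x =>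
    sub_nonneg.2 (Real.arctan_mono (mul_le_of_le_one_left (g_nonneg x) hc₁.le))
  have integral_le : ∫ x, Real.arctan (g x) ∂μ ≤ ∫ x, Real.arctan (c * g x) ∂μ := by
    rw [hμ.integral_eq hT (integrable_arctan hg), inv_mul_le_iff₀ (by positivity),
      ← nsmul_eq_mul, Fintype.card, ← Finset.sum_const]
    exact Finset.sum_le_sum fun i _ => integral_mono (integrable_arctan (hg.comp (hT i)))
      (integrable_arctan (hg.const_mul c)) fun x => Real.arctan_mono (g_map_le i x)
  have integral_eq_zero : ∫ x, (Real.arctan (g x) - Real.arctan (c * g x)) ∂μ = 0 := by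
    refine le_antisymm ?_ (integral_nonneg arctan_le)
    rw [integral_sub (integrable_arctan hg) (integrable_arctan (hg.const_mul c))]
    exact sub_nonpos.2 integral_le
  rw [integral_eq_zero_iff_of_nonneg arctan_le
    ((integrable_arctan hg).sub (integrable_arctan (hg.const_mul c)))] at integral_eq_zero
  filter_upwards [integral_eq_zero] with x hx
  have hgx : g x = c * g x := Real.arctan_injective (sub_eq_zero.1 hx)
  have : g x = 0 := by nlinarith [g_nonneg x]
  exact neg_nonpos.1 ((le_max_left (-h x) 0).trans this.le)

end SelfSimilar

lemma integrable_of_ae_mem_isCompact {X E : Type*} [TopologicalSpace X] [T2Space X]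
    [MeasurableSpace X] [OpensMeasurableSpace X] [NormedAddCommGroup E] {μ : Measure X}
    [IsFiniteMeasureOnCompacts μ] {K : Set X} (hK : IsCompact K) (hμK : ∀ᵐ x ∂μ, x ∈ K) {F : X → E}
    (hF : Continuous F) : Integrable F μ := by
  rw [← Measure.restrict_eq_self_of_ae_mem hμK]
  exact hF.continuousOn.integrableOn_compact hK

section Covariance

open ProbabilityTheory

variable {Ω : Type*} [MeasurableSpace Ω] {μ : Measure Ω}

lemma covariance_sq_le_variance_mul_variance [IsFiniteMeasure μ] {X Y : Ω → ℝ} (hX : MemLp X 2 μ)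
    (hY : MemLp Y 2 μ) : cov[X, Y; μ] ^ 2 ≤ Var[X; μ] * Var[Y; μ] := by
  have variance_nonneg_of_smul_add (t : ℝ) :
      0 ≤ Var[Y; μ] * (t * t) + 2 * cov[X, Y; μ] * t + Var[X; μ] := by
    have h := variance_nonneg (X + t • Y) μ
    rw [variance_add hX (hY.const_smul t), variance_smul, covariance_smul_right] at h
    linarith
  have := discrim_le_zero variance_nonneg_of_smul_add
  rw [discrim] at this
  linarith

variable {f X : Ω → ℝ}

lemma abs_integral_mul_le_mul_integral (hf : Integrable f μ) (hf₀ : ∀ᵐ x ∂μ, 0 ≤ f x)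
    {s : ℝ} (hXs : ∀ᵐ x ∂μ, |X x| ≤ s) :
    |∫ x, f x * X x ∂μ| ≤ s * ∫ x, f x ∂μ := by
  rw [← integral_const_mul, ← Real.norm_eq_abs]
  refine norm_integral_le_of_norm_le (hf.const_mul s) ?_
  filter_upwards [hf₀, hXs] with x hfx hXx
  rw [Real.norm_eq_abs, abs_mul, abs_of_nonneg hfx, mul_comm]
  exact mul_le_mul_of_nonneg_right hXx hfx

lemma sq_integral_mul_le [IsProbabilityMeasure μ] (hf : AEMeasurable f μ)
    (hf₀₁ : ∀ᵐ x ∂μ, f x ∈ Set.Icc 0 1) (hX : MemLp X 2 μ) (hX₀ : ∫ x, X x ∂μ = 0) :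
    (∫ x, f x * X x ∂μ) ^ 2 ≤
      (∫ x, X x ^ 2 ∂μ) * ((∫ x, f x ∂μ) * (1 - ∫ x, f x ∂μ)) := by
  have hf₂ : MemLp f 2 μ := memLp_of_bounded hf₀₁ hf.aestronglyMeasurable 2
  have hcov : cov[f, X; μ] = ∫ x, f x * X x ∂μ := by
    rw [covariance_eq_sub hf₂ hX, hX₀, mul_zero, sub_zero]
    rfl
  calc (∫ x, f x * X x ∂μ) ^ 2 ≤ Var[f; μ] * Var[X; μ] :=
        hcov ▸ covariance_sq_le_variance_mul_variance hf₂ hX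
    _ ≤ (1 - ∫ x, f x ∂μ) * (∫ x, f x ∂μ - 0) * ∫ x, X x ^ 2 ∂μ := by
        rw [variance_of_integral_eq_zero hX.aemeasurable hX₀]
        gcongr
        exact variance_le_sub_mul_sub hf₀₁ hf
    _ = _ := by ring

lemma abs_le_mul_mul_one_sub {m s p : ℝ} (hs : 0 ≤ s) (hp₀ : 0 ≤ p) (hp₁ : p ≤ 1)
    (hsq : m ^ 2 ≤ s ^ 2 / 4 * (p * (1 - p))) (hleft : |m| ≤ s * p) (hright : |m| ≤ s * (1 - p)) :
    |m| ≤ 5 / 4 * s * (p * (1 - p)) := by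
  have hq : 0 ≤ 1 - p := sub_nonneg.2 hp₁
  rcases le_total p (1 / 5) with hp | hp
  · nlinarith [mul_nonneg (mul_nonneg hs hp₀) (sub_nonneg.2 hp)]
  rcases le_total (4 / 5) p with hp' | hp'
  · nlinarith [mul_nonneg (mul_nonneg hs hq) (sub_nonneg.2 hp')]
  have hpq : 4 / 25 ≤ p * (1 - p) := by nlinarith
  refine abs_le_of_sq_le_sq (hsq.trans ?_) (by positivity)
  have := mul_le_mul_of_nonneg_left hpq (by positivity : 0 ≤ 25 / 16 * s ^ 2 * (p * (1 - p)))
  linarith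

lemma abs_integral_mul_le_of_integral_sq_le [IsProbabilityMeasure μ] (hf : AEMeasurable f μ)
    (hf₀₁ : ∀ᵐ x ∂μ, f x ∈ Set.Icc 0 1) (hX : AEStronglyMeasurable X μ)
    (hX₀ : ∫ x, X x ∂μ = 0) {s : ℝ} (hXs : ∀ᵐ x ∂μ, |X x| ≤ s)
    (hX₂ : ∫ x, X x ^ 2 ∂μ ≤ s ^ 2 / 4) :
    |∫ x, f x * X x ∂μ| ≤ 5 / 4 * s * ((∫ x, f x ∂μ) * (1 - ∫ x, f x ∂μ)) := by
  have hX_mem : MemLp X 2 μ := MemLp.of_bound hX s hXs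
  have hf_mem : MemLp f 2 μ := memLp_of_bounded hf₀₁ hf.aestronglyMeasurable 2
  have hf_int : Integrable f μ := hf_mem.integrable (by norm_num)
  have hfX_int : Integrable (fun x => f x * X x) μ := hf_mem.integrable_mul hX_mem
  have integral_one_sub : ∫ x, (1 - f x) ∂μ = 1 - ∫ x, f x ∂μ := by
    rw [integral_sub (integrable_const 1) hf_int, integral_const, probReal_univ, one_smul]
  have integral_one_sub_mul : ∫ x, (1 - f x) * X x ∂μ = -∫ x, f x * X x ∂μ := by
    simp only [sub_mul, one_mul]
    rw [integral_sub (hX_mem.integrable (by norm_num)) hfX_int, hX₀, zero_sub]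
  obtain ⟨x, hx⟩ := hXs.exists
  have hp₀ : 0 ≤ ∫ x, f x ∂μ := integral_nonneg_of_ae (hf₀₁.mono fun x hx => hx.1)
  have hq₀ : 0 ≤ ∫ x, (1 - f x) ∂μ :=
    integral_nonneg_of_ae (hf₀₁.mono fun x hx => sub_nonneg.2 hx.2)
  have hleft := abs_integral_mul_le_mul_integral hf_int (hf₀₁.mono fun x hx => hx.1) hXs
  have hright := abs_integral_mul_le_mul_integral ((integrable_const 1).sub hf_int)
    (hf₀₁.mono fun x hx => sub_nonneg.2 hx.2) hXs
  simp only [Pi.sub_apply] at hright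
  rw [integral_one_sub] at hq₀ hright
  rw [integral_one_sub_mul, abs_neg] at hright
  refine abs_le_mul_mul_one_sub ((abs_nonneg _).trans hx) hp₀ (sub_nonneg.1 hq₀) ?_ hleft hright
  exact (sq_integral_mul_le hf hf₀₁ hX_mem hX₀).trans
    (mul_le_mul_of_nonneg_right hX₂ (mul_nonneg hp₀ hq₀))

end Covariance

section ThreeIndices

variable {i j k : Fin 3}

lemma exists_ne_and_ne (i j : Fin 3) : ∃ k, i ≠ k ∧ j ≠ k := by
  decide +revert

lemma eq_or_eq_or_eq_of_ne (hij : i ≠ j) (hik : i ≠ k) (hjk : j ≠ k) (l : Fin 3) :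
    l = i ∨ l = j ∨ l = k := by
  decide +revert

lemma sum_eq_add_add_of_ne {M : Type*} [AddCommMonoid M] (hij : i ≠ j) (hik : i ≠ k)
    (hjk : j ≠ k) (g : Fin 3 → M) : ∑ l, g l = g i + g j + g k := by
  have huniv : (Finset.univ : Finset (Fin 3)) = {i, j, k} := by decide +revert
  rw [huniv, Finset.sum_insert (by simp [hij, hik]), Finset.sum_pair hjk, add_assoc]

end ThreeIndices

section Charge

/-- The barycentric coordinates of the image of the point with coordinates `b` under the
homothety of ratio `3` centred at the vertex `i`. -/
def expandCoord (i : Fin 3) (b : Fin 3 → ℝ) : Fin 3 → ℝ :=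
  fun j => 3 * b j - 2 * (Pi.single i 1 : Fin 3 → ℝ) j

open Classical in
/-- The charge of the point with barycentric coordinates `b`, which measures how much it can lower
the distortion of the measure on the triangle. It is `1` near the centroid, `1 / 2` in a
surrounding region and `0` far away; the thresholds are chosen so that the charges of the three
expanded points add up to at most the charge of the point. -/
def charge (b : Fin 3 → ℝ) : ℝ :=
  if ∀ i j, b i - b j < 8 / 5 then 1
  else if (∀ i j, b i - b j < 12 / 5) ∧ ∀ i, -1 < b i then 1 / 2 else 0

variable {i j : Fin 3} {b : Fin 3 → ℝ}

lemma expandCoord_self (i : Fin 3) (b : Fin 3 → ℝ) : expandCoord i b i = 3 * b i - 2 := by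
  simp [expandCoord]

lemma expandCoord_of_ne (hij : i ≠ j) (b : Fin 3 → ℝ) : expandCoord i b j = 3 * b j := by
  simp [expandCoord, hij.symm]

lemma expandCoord_le (i j : Fin 3) (b : Fin 3 → ℝ) : expandCoord i b j ≤ 3 * b j := by
  obtain rfl | hij := eq_or_ne i j
  · linarith [expandCoord_self i b]
  · exact (expandCoord_of_ne hij b).le

lemma le_expandCoord (i j : Fin 3) (b : Fin 3 → ℝ) : 3 * b j - 2 ≤ expandCoord i b j := by
  obtain rfl | hij := eq_or_ne i j
  · exact (expandCoord_self i b).ge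
  · linarith [expandCoord_of_ne hij b]

lemma sum_expandCoord (hb : ∑ i, b i = 1) (i : Fin 3) : ∑ j, expandCoord i b j = 1 := by
  simp only [expandCoord, Finset.sum_sub_distrib, ← Finset.mul_sum, hb, Finset.sum_pi_single',
    Finset.mem_univ, if_true]
  norm_num

lemma charge_eq_one (h : ∀ i j, b i - b j < 8 / 5) : charge b = 1 := if_pos h

lemma charge_nonneg (b : Fin 3 → ℝ) : 0 ≤ charge b := by
  unfold charge
  split_ifs <;> norm_num

lemma charge_le_one (b : Fin 3 → ℝ) : charge b ≤ 1 := by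
  unfold charge
  split_ifs <;> norm_num

lemma charge_le_half (h : ¬ ∀ i j, b i - b j < 8 / 5) : charge b ≤ 1 / 2 := by
  rw [charge, if_neg h]
  split_ifs <;> norm_num

lemma lt_and_lt_of_charge_ne_zero (hb : ∑ i, b i = 1) (h : charge b ≠ 0) :
    (∀ i j, b i - b j < 12 / 5) ∧ ∀ i, -1 < b i := by
  by_cases hnear : ∀ i j, b i - b j < 8 / 5
  · refine ⟨fun i j => (hnear i j).trans (by norm_num), fun i => ?_⟩
    obtain ⟨j, hji⟩ := exists_ne i
    obtain ⟨k, hik, hjk⟩ := exists_ne_and_ne i j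
    rw [sum_eq_add_add_of_ne hji.symm hik hjk] at hb
    linarith [hnear j i, hnear k i]
  · by_contra hfar
    rw [charge, if_neg hnear, if_neg hfar] at h
    exact h rfl

lemma third_lt_of_charge_expandCoord_ne_zero (hb : ∑ i, b i = 1)
    (h : charge (expandCoord i b) ≠ 0) : 1 / 3 < b i := by
  have := (lt_and_lt_of_charge_ne_zero (sum_expandCoord hb i) h).2 i
  rw [expandCoord_self] at this
  linarith

lemma charge_eq_one_of_charge_expandCoord_ne_zero (hb : ∑ i, b i = 1)
    (h : charge (expandCoord i b) ≠ 0) : charge b = 1 := by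
  refine charge_eq_one fun j k => ?_
  linarith [(lt_and_lt_of_charge_ne_zero (sum_expandCoord hb i) h).1 j k, le_expandCoord i j b,
    expandCoord_le i k b]

lemma charge_expandCoord_le_half (hb : ∑ i, b i = 1) (hij : i ≠ j)
    (h : charge (expandCoord j b) ≠ 0) : charge (expandCoord i b) ≤ 1 / 2 := by
  refine charge_le_half fun hnear => ?_
  have hi := hnear j i
  have hj := (lt_and_lt_of_charge_ne_zero (sum_expandCoord hb j) h).1 i j
  rw [expandCoord_self, expandCoord_of_ne hij] at hi
  rw [expandCoord_self, expandCoord_of_ne hij.symm] at hj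
  linarith

lemma charge_expandCoord_add_le_one (hb : ∑ i, b i = 1) (hij : i ≠ j) :
    charge (expandCoord i b) + charge (expandCoord j b) ≤ 1 := by
  by_cases hi : charge (expandCoord i b) = 0
  · rw [hi, zero_add]
    exact charge_le_one _
  by_cases hj : charge (expandCoord j b) = 0
  · rw [hj, add_zero]
    exact charge_le_one _
  · linarith [charge_expandCoord_le_half hb hij hj, charge_expandCoord_le_half hb hij.symm hi]

lemma exists_charge_expandCoord_eq_zero (hb : ∑ i, b i = 1) :
    ∃ i, charge (expandCoord i b) = 0 := by
  by_contra! h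
  have := Finset.sum_lt_sum_of_nonempty Finset.univ_nonempty fun i _ =>
    third_lt_of_charge_expandCoord_ne_zero hb (h i)
  norm_num [hb] at this

lemma sum_charge_expandCoord_le (hb : ∑ i, b i = 1) :
    ∑ i, charge (expandCoord i b) ≤ charge b := by
  by_cases h : ∃ i, charge (expandCoord i b) ≠ 0
  · obtain ⟨i, hi⟩ := h
    obtain ⟨k, hk⟩ := exists_charge_expandCoord_eq_zero hb
    have hki : k ≠ i := fun hki => hi (hki ▸ hk)
    obtain ⟨j, hkj, hij⟩ := exists_ne_and_ne k i
    rw [charge_eq_one_of_charge_expandCoord_ne_zero hb hi, sum_eq_add_add_of_ne hki hkj hij, hk,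
      zero_add]
    exact charge_expandCoord_add_le_one hb hij
  · push Not at h
    rw [Finset.sum_eq_zero fun i _ => h i]
    exact charge_nonneg b

end Charge

section VertexExcess

/-- `‖vᵢ - a‖ ^ 2 - ‖vᵢ - c‖ ^ 2`, where `a` has barycentric coordinates `b` in an equilateral
triangle of side `1` with vertices `vᵢ` and centroid `c`. -/
def vertexExcess (b : Fin 3 → ℝ) (i : Fin 3) : ℝ :=
  (∑ j, (b j - 1 / 3) ^ 2) / 2 - (b i - 1 / 3)

variable {i j k : Fin 3} {b : Fin 3 → ℝ}

lemma vertexExcess_eq_of_side (hb : ∑ i, b i = 1) (hij : i ≠ j) (hik : i ≠ k) (hjk : j ≠ k) :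
    vertexExcess b i = ((b i - b j - 1) ^ 2 + 3 * b k ^ 2) / 4 - 1 / 3 := by
  rw [vertexExcess, sum_eq_add_add_of_ne hij hik hjk fun l => (b l - 1 / 3) ^ 2]
  rw [sum_eq_add_add_of_ne hij hik hjk] at hb
  rw [show b k = 1 - b i - b j by linarith]
  ring

lemma vertexExcess_eq_of_opposite_side (hb : ∑ i, b i = 1) (hij : i ≠ j) (hik : i ≠ k)
    (hjk : j ≠ k) : vertexExcess b k = ((b i - b j) ^ 2 + 3 * (b k - 1) ^ 2) / 4 - 1 / 3 := by
  rw [vertexExcess_eq_of_side hb hik.symm hjk.symm hij]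
  rw [sum_eq_add_add_of_ne hij hik hjk] at hb
  rw [show b k = 1 - b i - b j by linarith]
  ring

lemma le_vertexExcess_of_gap (hb : ∑ i, b i = 1) (hgap : 8 / 5 ≤ b i - b j) :
    -(7 / 27) ≤ vertexExcess b i ∧ ∀ k ≠ i, 2 / 27 ≤ vertexExcess b k ∧
      2 / 9 ≤ 2 * vertexExcess b i + vertexExcess b k := by
  have hij : i ≠ j := by
    rintro rfl
    norm_num at hgap
  obtain ⟨k, hik, hjk⟩ := exists_ne_and_ne i j
  have hi := vertexExcess_eq_of_side hb hij hik hjk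
  have hj := vertexExcess_eq_of_side hb hij.symm hjk hik
  have hk := vertexExcess_eq_of_opposite_side hb hij hik hjk
  refine ⟨by nlinarith, fun l hl => ?_⟩
  obtain rfl | rfl | rfl := eq_or_eq_or_eq_of_ne hij hik hjk l
  · exact absurd rfl hl
  · constructor <;> nlinarith
  · constructor <;> nlinarith [sq_nonneg (3 * b l - 1)]

lemma exists_le_vertexExcess (hb : ∑ i, b i = 1) (h : ¬ ∀ i j, b i - b j < 8 / 5) :
    ∃ i, -(7 / 27) ≤ vertexExcess b i ∧ ∀ k ≠ i, 2 / 27 ≤ vertexExcess b k ∧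
      2 / 9 ≤ 2 * vertexExcess b i + vertexExcess b k := by
  push Not at h
  obtain ⟨i, j, hgap⟩ := h
  exact ⟨i, le_vertexExcess_of_gap hb hgap⟩

lemma le_vertexExcess_of_large_gap (hb : ∑ i, b i = 1) (hgap : 12 / 5 ≤ b i - b j) (k : Fin 3) :
    2 / 27 ≤ vertexExcess b k := by
  obtain rfl | hki := eq_or_ne k i
  · have hkj : k ≠ j := by
      rintro rfl
      norm_num at hgap
    obtain ⟨l, hkl, hjl⟩ := exists_ne_and_ne k j
    rw [vertexExcess_eq_of_side hb hkj hkl hjl]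
    nlinarith
  · have hgap' : 8 / 5 ≤ b i - b j := le_trans (by norm_num) hgap
    exact ((le_vertexExcess_of_gap hb hgap').2 k hki).1

lemma le_vertexExcess_of_le_neg_one (hb : ∑ i, b i = 1) (hi : b i ≤ -1) (k : Fin 3) :
    2 / 27 ≤ vertexExcess b k := by
  obtain rfl | hki := eq_or_ne k i
  · obtain ⟨j, hjk⟩ := exists_ne k
    obtain ⟨l, hkl, hjl⟩ := exists_ne_and_ne k j
    rw [vertexExcess_eq_of_opposite_side hb hjl hjk hkl.symm]
    nlinarith [sq_nonneg (b j - b l)]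
  · obtain ⟨j, hkj, hij⟩ := exists_ne_and_ne k i
    rw [vertexExcess_eq_of_side hb hkj hki hij.symm]
    nlinarith [sq_nonneg (b k - b j - 1)]

lemma le_vertexExcess_of_charge_eq_zero (hb : ∑ i, b i = 1) (h : charge b = 0) (k : Fin 3) :
    2 / 27 ≤ vertexExcess b k := by
  have hfar : ¬ ((∀ i j, b i - b j < 12 / 5) ∧ ∀ i, -1 < b i) := fun hmid => by
    unfold charge at h
    split_ifs at h <;> norm_num at h
  push Not at hfar
  by_cases hgap : ∀ i j, b i - b j < 12 / 5
  · obtain ⟨i, hi⟩ := hfar hgap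
    exact le_vertexExcess_of_le_neg_one hb hi k
  · push Not at hgap
    obtain ⟨i, j, hij⟩ := hgap
    exact le_vertexExcess_of_large_gap hb hij k

end VertexExcess

section WeightedSum

variable {ι : Type*} [Fintype ι]

lemma sum_mul_le_mul_max {w l : ι → ℝ} {K : ℝ} (hw : ∀ i, 0 ≤ w i)
    (hw₁ : ∑ i, w i = 1) (hK : 0 ≤ K) {j : ι} (hj : l j ≤ K)
    (hne : ∀ k ≠ j, l k ≤ 0 ∧ 2 * l j + l k ≤ 0) :
    ∑ i, w i * l i ≤ K * max (3 * w j - 2) 0 := by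
  classical
  rw [Fintype.sum_eq_add_sum_compl j] at hw₁ ⊢
  rcases le_total (l j) 0 with hlj | hlj
  · calc w j * l j + ∑ i ∈ {j}ᶜ, w i * l i ≤ 0 := by
          refine add_nonpos (mul_nonpos_of_nonneg_of_nonpos (hw j) hlj) ?_
          exact Finset.sum_nonpos fun i hi => mul_nonpos_of_nonneg_of_nonpos (hw i)
            (hne i (by simpa using hi)).1
      _ ≤ K * max (3 * w j - 2) 0 := mul_nonneg hK (le_max_right _ _)
  · calc w j * l j + ∑ i ∈ {j}ᶜ, w i * l i
        ≤ w j * l j + ∑ i ∈ {j}ᶜ, w i * (-2 * l j) := by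
          gcongr with i hi
          · exact hw i
          · linarith [(hne i (by simpa using hi)).2]
      _ = l j * (3 * w j - 2) := by
          rw [← Finset.sum_mul, eq_sub_of_add_eq' hw₁]
          ring
      _ ≤ l j * max (3 * w j - 2) 0 := by gcongr; exact le_max_left _ _
      _ ≤ K * max (3 * w j - 2) 0 := by gcongr

end WeightedSum

section CenteredSums

variable {ι : Type*} [Fintype ι]

lemma sq_sum_mul_le_of_sum_eq_zero {e : ι → ℝ} (he : ∑ i, e i = 0) (p : ι → ℝ) (c : ℝ) :
    (∑ i, e i * p i) ^ 2 ≤ (∑ i, e i ^ 2) * ∑ i, (p i - c) ^ 2 := by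
  have hshift : ∑ i, e i * p i = ∑ i, e i * (p i - c) := by
    simp only [mul_sub, Finset.sum_sub_distrib, ← Finset.sum_mul, he, zero_mul, sub_zero]
  rw [hshift]
  exact Finset.sum_mul_sq_le_sq_mul_sq _ _ _

lemma sum_sq_sub_add_sum_mul_one_sub {p : ι → ℝ} {c : ℝ} (hc : ∑ i, p i = Fintype.card ι * c) :
    ∑ i, (p i - c) ^ 2 + ∑ i, p i * (1 - p i) = Fintype.card ι * (c * (1 - c)) := by
  calc ∑ i, (p i - c) ^ 2 + ∑ i, p i * (1 - p i) = ∑ i, ((1 - 2 * c) * p i + c ^ 2) := by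
        rw [← Finset.sum_add_distrib]
        exact Finset.sum_congr rfl fun i _ => by ring
    _ = Fintype.card ι * (c * (1 - c)) := by
        rw [Finset.sum_add_distrib, ← Finset.mul_sum, hc, Finset.sum_const, nsmul_eq_mul,
          Finset.card_univ]
        ring

lemma sum_sq_sub_le_two_thirds {p : Fin 3 → ℝ} {c : ℝ} (hp : ∀ i, p i ∈ Set.Icc 0 1)
    (hc : ∑ i, p i = 3 * c) : ∑ i, (p i - c) ^ 2 ≤ 2 / 3 := by
  have hprod : 0 ≤ p 0 * p 1 * p 2 :=
    mul_nonneg (mul_nonneg (hp 0).1 (hp 1).1) (hp 2).1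
  have hprod' : 0 ≤ (1 - p 0) * (1 - p 1) * (1 - p 2) :=
    mul_nonneg (mul_nonneg (sub_nonneg.2 (hp 0).2) (sub_nonneg.2 (hp 1).2))
      (sub_nonneg.2 (hp 2).2)
  have hsq (i : Fin 3) : 0 ≤ p i * (1 - p i) := mul_nonneg (hp i).1 (sub_nonneg.2 (hp i).2)
  rw [Fin.sum_univ_three] at hc ⊢
  obtain rfl : c = (p 0 + p 1 + p 2) / 3 := by linarith
  nlinarith [hsq 0, hsq 1, hsq 2]

lemma sq_two_mul_sum_add_sum_le {e p m : Fin 3 → ℝ} {s c : ℝ} (he : ∑ i, e i = 0)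
    (hs : 0 ≤ s) (hs₂ : s ^ 2 = 2 / 3 * ∑ i, e i ^ 2) (hp : ∀ i, p i ∈ Set.Icc 0 1)
    (hc : ∑ i, p i = 3 * c) (hm : ∀ i, |m i| ≤ 5 / 4 * s * (p i * (1 - p i)))
    (hm₂ : ∀ i, m i ^ 2 ≤ s ^ 2 / 4 * (p i * (1 - p i))) :
    (2 * ∑ i, e i * p i + ∑ i, m i) ^ 2 ≤ 12 * (∑ i, e i ^ 2) * (c * (1 - c)) := by
  set V := ∑ i, e i ^ 2
  set X := ∑ i, e i * p i
  set Y := ∑ i, m i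
  set Q := ∑ i, (p i - c) ^ 2
  set R := ∑ i, p i * (1 - p i)
  have hR : 0 ≤ R :=
    Finset.sum_nonneg fun i _ => mul_nonneg (hp i).1 (sub_nonneg.2 (hp i).2)
  have hX₂ : X ^ 2 ≤ V * Q := sq_sum_mul_le_of_sum_eq_zero he p c
  have hX : |X| ≤ s := by
    refine abs_le_of_sq_le_sq (hX₂.trans ?_) hs
    rw [hs₂, mul_comm]
    gcongr
    exact sum_sq_sub_le_two_thirds hp hc
  have hY : |Y| ≤ 5 / 4 * s * R := by
    rw [Finset.mul_sum]
    exact (Finset.abs_sum_le_sum_abs _ _).trans (Finset.sum_le_sum fun i _ => hm i)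
  have hY₂ : Y ^ 2 ≤ 3 * (s ^ 2 / 4 * R) := by
    rw [Finset.mul_sum]
    refine (sq_sum_le_card_mul_sum_sq (s := Finset.univ) (f := m)).trans ?_
    simp only [Finset.card_univ, Fintype.card_fin, Nat.cast_ofNat]
    gcongr with i
    exact hm₂ i
  have hXY : X * Y ≤ s * (5 / 4 * s * R) :=
    (le_abs_self _).trans (abs_mul X Y ▸ mul_le_mul hX hY (abs_nonneg _) hs)
  have hQR : Q + R = 3 * (c * (1 - c)) := by
    simpa using sum_sq_sub_add_sum_mul_one_sub (p := p) (c := c) (by simpa using hc)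
  calc (2 * X + Y) ^ 2 = 4 * X ^ 2 + 4 * (X * Y) + Y ^ 2 := by ring
    _ ≤ 4 * (V * Q) + 4 * (s * (5 / 4 * s * R)) + 3 * (s ^ 2 / 4 * R) := by gcongr
    _ = 4 * V * (Q + R) - V * R / 6 := by linear_combination (23 / 4 * R) * hs₂
    _ ≤ 4 * V * (Q + R) := sub_le_self _ (by positivity)
    _ = 12 * V * (c * (1 - c)) := by rw [hQR]; ring

end CenteredSums

section Triangle

/-- The vertices of the equilateral triangle `Tri`, which are the fixed points of the maps
`Smap i`. -/
def vertex : Fin 3 → E2 := ![pt 0 0, pt 1 0, pt (1 / 2) (√3 / 2)]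

/-- The barycentric coordinates with respect to `vertex`. -/
def bary (x : E2) : Fin 3 → ℝ := ![1 - x 0 - x 1 / √3, x 0 - x 1 / √3, 2 * (x 1 / √3)]

/-- The centroid of the triangle `Tri`, which is the mean of the R-measure. -/
def centroid : E2 := pt (1 / 2) (√3 / 6)

/-- The inverse of `Smap i`. -/
def expand (i : Fin 3) : E2 → E2 := AffineMap.homothety (vertex i) (3 : ℝ)

lemma pt_zero (a b : ℝ) : pt a b 0 = a := rfl

lemma pt_one (a b : ℝ) : pt a b 1 = b := rfl

lemma Smap_eq_homothety (i : Fin 3) :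
    Smap i = AffineMap.homothety (vertex i) (3⁻¹ : ℝ) := by
  ext x j
  fin_cases i <;> fin_cases j <;>
    simp [Smap, S1, S2, S3, vertex, AffineMap.homothety_apply, pt_zero, pt_one] <;> ring

lemma expand_Smap (i : Fin 3) (x : E2) : expand i (Smap i x) = x := by
  rw [expand, Smap_eq_homothety, ← AffineMap.homothety_mul_apply, mul_inv_cancel₀ three_ne_zero,
    AffineMap.homothety_one, AffineMap.id_apply]

lemma Smap_expand (i : Fin 3) (x : E2) : Smap i (expand i x) = x := by
  rw [expand, Smap_eq_homothety, ← AffineMap.homothety_mul_apply, inv_mul_cancel₀ three_ne_zero,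
    AffineMap.homothety_one, AffineMap.id_apply]

lemma continuous_Smap (i : Fin 3) : Continuous (Smap i) := by
  rw [Smap_eq_homothety]
  exact AffineMap.homothety_continuous _ _

lemma dist_Smap (i : Fin 3) (x y : E2) : dist (Smap i x) (Smap i y) = 3⁻¹ * dist x y := by
  simp [Smap_eq_homothety, AffineMap.homothety_apply, dist_smul₀]

@[fun_prop]
lemma continuous_bary_apply (i : Fin 3) : Continuous fun x => bary x i := by
  fin_cases i <;> simp only [bary] <;> fun_prop

lemma sum_bary (x : E2) : ∑ i, bary x i = 1 := by
  rw [Fin.sum_univ_three]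
  simp only [bary, Matrix.cons_val]
  ring

lemma bary_vertex (i : Fin 3) : bary (vertex i) = Pi.single i 1 := by
  ext j
  fin_cases i <;> fin_cases j <;> simp [bary, vertex, pt_zero, pt_one] <;>
    field_simp <;> norm_num

lemma bary_homothety (c : E2) (r : ℝ) (x : E2) :
    bary (AffineMap.homothety c r x) = AffineMap.homothety (bary c) r (bary x) := by
  ext i
  fin_cases i <;> simp [bary, AffineMap.homothety_apply] <;> ring

lemma bary_Smap (i : Fin 3) (x : E2) (j : Fin 3) :
    bary (Smap i x) j = bary x j / 3 + 2 / 3 * (Pi.single i 1 : Fin 3 → ℝ) j := by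
  rw [Smap_eq_homothety, bary_homothety, bary_vertex]
  simp only [AffineMap.homothety_apply, vsub_eq_sub, vadd_eq_add, Pi.add_apply, Pi.smul_apply,
    Pi.sub_apply, smul_eq_mul]
  ring

lemma bary_expand (i : Fin 3) (x : E2) : bary (expand i x) = expandCoord i (bary x) := by
  ext j
  rw [expand, bary_homothety, bary_vertex, expandCoord]
  simp only [AffineMap.homothety_apply, vsub_eq_sub, vadd_eq_add, Pi.add_apply, Pi.smul_apply,
    Pi.sub_apply, smul_eq_mul]
  ring

lemma bary_centroid (i : Fin 3) : bary centroid i = 1 / 3 := by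
  fin_cases i <;> simp [bary, centroid, pt_zero, pt_one] <;> field_simp <;> norm_num

lemma norm_sub_sq_eq (x y : E2) : ‖x - y‖ ^ 2 = (∑ i, (bary x i - bary y i) ^ 2) / 2 := by
  simp only [EuclideanSpace.norm_sq_eq, Fin.sum_univ_two, Fin.sum_univ_three, bary,
    Matrix.cons_val, Real.norm_eq_abs, sq_abs, PiLp.sub_apply]
  have hsq : (x 1 - y 1) ^ 2 = 3 * (x 1 / √3 - y 1 / √3) ^ 2 := by
    rw [← sub_div, div_pow, Real.sq_sqrt (by norm_num)]
    ring
  linear_combination hsq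

lemma norm_sub_centroid_sq (x : E2) :
    ‖x - centroid‖ ^ 2 = (∑ i, (bary x i - 1 / 3) ^ 2) / 2 := by
  simp only [norm_sub_sq_eq, bary_centroid]

lemma sum_bary_sub_third (x : E2) : ∑ i, (bary x i - 1 / 3) = 0 := by
  rw [Finset.sum_sub_distrib, sum_bary]
  norm_num

/-- The affine functional `x ↦ 2 * ⟪x - centroid, a - centroid⟫`, in barycentric coordinates. -/
def deviation (a x : E2) : ℝ := ∑ i, (bary a i - 1 / 3) * bary x i

lemma norm_sub_sq_sub_eq (x a : E2) :
    ‖x - a‖ ^ 2 - ‖x - centroid‖ ^ 2 = ‖a - centroid‖ ^ 2 - deviation a x := by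
  have ha := sum_bary_sub_third a
  simp only [norm_sub_centroid_sq]
  simp only [norm_sub_sq_eq, deviation]
  simp only [Fin.sum_univ_three] at ha ⊢
  linear_combination 1 / 3 * ha

lemma norm_sub_sq_sub_eq_sum (x a : E2) :
    ‖x - a‖ ^ 2 - ‖x - centroid‖ ^ 2 = ∑ i, bary x i * vertexExcess (bary a) i := by
  calc ‖x - a‖ ^ 2 - ‖x - centroid‖ ^ 2
      = (∑ i, bary x i) * ‖a - centroid‖ ^ 2 - ∑ i, (bary a i - 1 / 3) * bary x i := by
        rw [sum_bary, one_mul, norm_sub_sq_sub_eq, deviation]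
    _ = ∑ i, bary x i * vertexExcess (bary a) i := by
        rw [Finset.sum_mul, ← Finset.sum_sub_distrib]
        refine Finset.sum_congr rfl fun i _ => ?_
        rw [vertexExcess, ← norm_sub_centroid_sq]
        ring

@[fun_prop]
lemma continuous_deviation (a : E2) : Continuous (deviation a) :=
  continuous_finsetSum _ fun i _ => (continuous_bary_apply i).const_mul _

lemma deviation_Smap (a : E2) (i : Fin 3) (x : E2) :
    deviation a (Smap i x) = (deviation a x + 2 * (bary a i - 1 / 3)) / 3 := by
  calc deviation a (Smap i x)
      = ∑ j, ((bary a j - 1 / 3) * bary x j / 3 +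
          2 / 3 * ((bary a j - 1 / 3) * (Pi.single i 1 : Fin 3 → ℝ) j)) :=
        Finset.sum_congr rfl fun j _ => by rw [bary_Smap]; ring
    _ = (deviation a x + 2 * (bary a i - 1 / 3)) / 3 := by
        rw [Finset.sum_add_distrib, ← Finset.sum_div, ← Finset.mul_sum]
        simp only [Pi.single_apply, mul_ite, mul_one, mul_zero, Finset.sum_ite_eq',
          Finset.mem_univ, if_true, deviation]
        ring

lemma deviation_vertex (i : Fin 3) (x : E2) : deviation (vertex i) x = bary x i - 1 / 3 := by
  simp [deviation, bary_vertex, sub_mul, ← Finset.mul_sum, sum_bary, Pi.single_apply]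

lemma bary_mem_Icc {x : E2} (hx : ∀ i, 0 ≤ bary x i) (i : Fin 3) : bary x i ∈ Set.Icc 0 1 :=
  ⟨hx i, sum_bary x ▸ Finset.single_le_sum (fun j _ => hx j) (Finset.mem_univ i)⟩

lemma sum_sq_bary_sub_third_le {x : E2} (hx : ∀ i, 0 ≤ bary x i) :
    ∑ i, (bary x i - 1 / 3) ^ 2 ≤ 2 / 3 :=
  sum_sq_sub_le_two_thirds (bary_mem_Icc hx) (by rw [sum_bary]; norm_num)

lemma abs_deviation_le (a : E2) {x : E2} (hx : ∀ i, 0 ≤ bary x i) :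
    |deviation a x| ≤ 2 / √3 * ‖a - centroid‖ := by
  refine abs_le_of_sq_le_sq ?_ (by positivity)
  calc deviation a x ^ 2 ≤ (∑ i, (bary a i - 1 / 3) ^ 2) * ∑ i, (bary x i - 1 / 3) ^ 2 :=
        sq_sum_mul_le_of_sum_eq_zero (sum_bary_sub_third a) (bary x) _
    _ ≤ (∑ i, (bary a i - 1 / 3) ^ 2) * (2 / 3) := by
        gcongr
        exact sum_sq_bary_sub_third_le hx
    _ = (2 / √3 * ‖a - centroid‖) ^ 2 := by
        rw [mul_pow, div_pow, Real.sq_sqrt (by norm_num), norm_sub_centroid_sq]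
        ring

lemma norm_sub_centroid_le_one {x : E2} (hx : ∀ i, 0 ≤ bary x i) : ‖x - centroid‖ ≤ 1 := by
  refine (sq_le_one_iff₀ (norm_nonneg _)).1 ?_
  rw [norm_sub_centroid_sq]
  linarith [sum_sq_bary_sub_third_le hx]

end Triangle

section RMeasure

variable {P : Measure E2}

lemma integral_eq_sum_div_three (hP : IsSelfSimilar P Smap) {F : E2 → ℝ} (hF : Integrable F P) :
    ∫ x, F x ∂P = (∑ i, ∫ x, F (Smap i x) ∂P) / 3 := by
  rw [hP.integral_eq (fun i => (continuous_Smap i).measurable) hF, Fintype.card_fin,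
    div_eq_inv_mul, Nat.cast_ofNat]

variable [IsProbabilityMeasure P]

lemma ae_bary_nonneg (hP : IsSelfSimilar P Smap) : ∀ᵐ x ∂P, ∀ i, 0 ≤ bary x i := by
  refine ae_all_iff.2 fun i => hP.ae_nonneg (fun j => (continuous_Smap j).measurable)
    (continuous_bary_apply i).measurable (c := 1 / 3) (by norm_num) (by norm_num) fun j x => ?_
  have : (0 : Fin 3 → ℝ) i ≤ (Pi.single j 1 : Fin 3 → ℝ) i := Pi.single_nonneg.2 zero_le_one i
  rw [Pi.zero_apply] at this
  rw [bary_Smap]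
  linarith

lemma integrable_of_continuous (hP : IsSelfSimilar P Smap) {F : E2 → ℝ} (hF : Continuous F) :
    Integrable F P := by
  refine integrable_of_ae_mem_isCompact (isCompact_closedBall centroid 1) ?_ hF
  filter_upwards [ae_bary_nonneg hP] with x hx
  exact mem_closedBall_iff_norm.2 (norm_sub_centroid_le_one hx)

lemma integral_bary (hP : IsSelfSimilar P Smap) (i : Fin 3) : ∫ x, bary x i ∂P = 1 / 3 := by
  have hint := integrable_of_continuous hP (continuous_bary_apply i)
  have hself := integral_eq_sum_div_three hP hint
  simp only [bary_Smap, integral_add (hint.div_const 3) (integrable_const _), integral_div,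
    integral_const, probReal_univ, one_smul, Finset.sum_add_distrib, Finset.sum_const,
    ← Finset.mul_sum, Finset.card_univ, Fintype.card_fin, nsmul_eq_mul,
    Finset.sum_pi_single, Finset.mem_univ, if_true] at hself
  linarith

lemma integral_max_bary (hP : IsSelfSimilar P Smap) (i : Fin 3) :
    ∫ x, max (3 * bary x i - 2) 0 ∂P = 1 / 9 := by
  have hcont : Continuous fun x => max (3 * bary x i - 2) 0 :=
    (((continuous_bary_apply i).const_mul 3).sub continuous_const).max continuous_const
  have integral_Smap (j : Fin 3) :
      ∫ x, max (3 * bary (Smap j x) i - 2) 0 ∂P = (Pi.single i (1 / 3) : Fin 3 → ℝ) j := by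
    obtain rfl | hji := eq_or_ne j i
    · rw [Pi.single_eq_same, ← integral_bary hP j]
      refine integral_congr_ae ?_
      filter_upwards [ae_bary_nonneg hP] with x hx
      rw [bary_Smap, Pi.single_eq_same, max_eq_left] <;> linarith [hx j]
    · rw [Pi.single_eq_of_ne hji, integral_eq_zero_of_ae]
      filter_upwards [ae_bary_nonneg hP] with x hx
      rw [bary_Smap, Pi.single_eq_of_ne hji.symm, Pi.zero_apply, max_eq_right]
      linarith [(bary_mem_Icc hx i).2]
  rw [integral_eq_sum_div_three hP (integrable_of_continuous hP hcont)]
  simp only [integral_Smap, Finset.sum_pi_single', Finset.mem_univ, if_true]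
  norm_num

lemma integral_deviation (hP : IsSelfSimilar P Smap) (a : E2) : ∫ x, deviation a x ∂P = 0 := by
  simp only [deviation]
  rw [integral_finsetSum _ fun i _ =>
    (integrable_of_continuous hP (continuous_bary_apply i)).const_mul _]
  simp only [integral_const_mul, integral_bary hP, ← Finset.sum_mul, sum_bary_sub_third, zero_mul]

lemma integral_deviation_sq (hP : IsSelfSimilar P Smap) (a : E2) :
    ∫ x, deviation a x ^ 2 ∂P = ‖a - centroid‖ ^ 2 / 3 := by
  have integral_Smap (i : Fin 3) : ∫ x, deviation a (Smap i x) ^ 2 ∂P =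
      1 / 9 * ∫ x, deviation a x ^ 2 ∂P + 4 / 9 * (bary a i - 1 / 3) ^ 2 := by
    calc ∫ x, deviation a (Smap i x) ^ 2 ∂P
        = ∫ x, (1 / 9 * deviation a x ^ 2 + 4 / 9 * (bary a i - 1 / 3) * deviation a x +
            4 / 9 * (bary a i - 1 / 3) ^ 2) ∂P := by
          refine integral_congr_ae (.of_forall fun x => ?_)
          simp only [deviation_Smap]
          ring
      _ = _ := by
          rw [integral_add (integrable_of_continuous hP (by fun_prop)) (integrable_const _),
            integral_add (integrable_of_continuous hP (by fun_prop))
              (integrable_of_continuous hP (by fun_prop)), integral_const_mul,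
            integral_const_mul, integral_deviation hP, integral_const, probReal_univ, one_smul,
            mul_zero, add_zero]
  have hself := integral_eq_sum_div_three hP (F := fun x => deviation a x ^ 2)
    (integrable_of_continuous hP (by fun_prop))
  simp only [integral_Smap, Finset.sum_add_distrib, Finset.sum_const, ← Finset.mul_sum,
    Finset.card_univ, Fintype.card_fin, nsmul_eq_mul] at hself
  rw [norm_sub_centroid_sq]
  linarith

lemma integral_norm_sub_centroid_sq (hP : IsSelfSimilar P Smap) :
    ∫ x, ‖x - centroid‖ ^ 2 ∂P = 1 / 6 := by
  have norm_vertex_sub_centroid_sq (i : Fin 3) : ‖vertex i - centroid‖ ^ 2 = 1 / 3 := by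
    rw [norm_sub_centroid_sq, bary_vertex]
    fin_cases i <;> simp [Fin.sum_univ_three] <;> norm_num
  simp only [norm_sub_centroid_sq, ← deviation_vertex]
  rw [integral_div, integral_finsetSum _ fun i _ =>
    integrable_of_continuous hP (by fun_prop)]
  simp only [integral_deviation_sq hP, norm_vertex_sub_centroid_sq]
  norm_num

lemma integral_norm_sub_sq (hP : IsSelfSimilar P Smap) (a : E2) :
    ∫ x, ‖x - a‖ ^ 2 ∂P = 1 / 6 + ‖a - centroid‖ ^ 2 := by
  have hsplit (x : E2) :
      ‖x - a‖ ^ 2 = ‖x - centroid‖ ^ 2 + (‖a - centroid‖ ^ 2 - deviation a x) := by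
    linarith [norm_sub_sq_sub_eq x a]
  simp only [hsplit]
  rw [integral_add (integrable_of_continuous hP (by fun_prop))
    (integrable_of_continuous hP (by fun_prop)),
    integral_sub (integrable_const _) (integrable_of_continuous hP (by fun_prop)),
    integral_norm_sub_centroid_sq hP, integral_deviation hP, integral_const, probReal_univ,
    one_smul, sub_zero]

end RMeasure

section PointInequality

variable {P : Measure E2} [IsProbabilityMeasure P] {f : E2 → ℝ}

lemma integrable_mul_of_continuous (hP : IsSelfSimilar P Smap) (hf : Measurable f)
    (hf₀₁ : ∀ x, f x ∈ Set.Icc 0 1) {F : E2 → ℝ} (hF : Continuous F) :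
    Integrable (fun x => f x * F x) P :=
  (integrable_of_continuous hP hF).bdd_mul hf.aestronglyMeasurable
    (.of_forall fun x => abs_le.2 ⟨neg_one_lt_zero.le.trans (hf₀₁ x).1, (hf₀₁ x).2⟩)

lemma integrable_of_mem_Icc (hf : Measurable f) (hf₀₁ : ∀ x, f x ∈ Set.Icc 0 1) :
    Integrable f P :=
  (memLp_of_bounded (.of_forall hf₀₁) hf.aestronglyMeasurable 1).integrable le_rfl

lemma integral_mem_Icc (hf : Measurable f) (hf₀₁ : ∀ x, f x ∈ Set.Icc 0 1) :
    ∫ x, f x ∂P ∈ Set.Icc 0 1 := by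
  refine ⟨integral_nonneg fun x => (hf₀₁ x).1, ?_⟩
  simpa using integral_mono (integrable_of_mem_Icc (P := P) hf hf₀₁) (integrable_const 1)
    fun x => (hf₀₁ x).2

lemma integral_mul_deviation (hP : IsSelfSimilar P Smap) (hf : Measurable f)
    (hf₀₁ : ∀ x, f x ∈ Set.Icc 0 1) (a : E2) :
    ∫ x, f x * deviation a x ∂P =
      (2 * ∑ i, (bary a i - 1 / 3) * ∫ x, f (Smap i x) ∂P +
        ∑ i, ∫ x, f (Smap i x) * deviation a x ∂P) / 9 := by
  have hfS (i : Fin 3) : Measurable fun x => f (Smap i x) :=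
    hf.comp (continuous_Smap i).measurable
  have integral_Smap (i : Fin 3) : ∫ x, f (Smap i x) * deviation a (Smap i x) ∂P =
      2 / 3 * ((bary a i - 1 / 3) * ∫ x, f (Smap i x) ∂P) +
        1 / 3 * ∫ x, f (Smap i x) * deviation a x ∂P := by
    rw [← mul_assoc, ← integral_const_mul, ← integral_const_mul, ← integral_add
      ((integrable_of_mem_Icc (hfS i) fun x => hf₀₁ _).const_mul _)
      ((integrable_mul_of_continuous hP (hfS i) (fun x => hf₀₁ _)
        (continuous_deviation a)).const_mul _)]
    refine integral_congr_ae (.of_forall fun x => ?_)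
    simp only [deviation_Smap]
    ring
  rw [integral_eq_sum_div_three hP
    (integrable_mul_of_continuous hP hf hf₀₁ (continuous_deviation a))]
  simp only [integral_Smap, Finset.sum_add_distrib, ← Finset.mul_sum]
  ring

lemma sq_integral_mul_deviation_le (hP : IsSelfSimilar P Smap) (hf : Measurable f)
    (hf₀₁ : ∀ x, f x ∈ Set.Icc 0 1) (a : E2) :
    (∫ x, f x * deviation a x ∂P) ^ 2 ≤
      8 / 27 * ‖a - centroid‖ ^ 2 * ((∫ x, f x ∂P) * (1 - ∫ x, f x ∂P)) := by
  have hfS (i : Fin 3) : Measurable fun x => f (Smap i x) :=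
    hf.comp (continuous_Smap i).measurable
  have hdev : MemLp (deviation a) 2 P := .of_bound
    (continuous_deviation a).aestronglyMeasurable _
    ((ae_bary_nonneg hP).mono fun x hx => abs_deviation_le a hx)
  have hs₂ : (2 / √3 * ‖a - centroid‖) ^ 2 = 2 / 3 * ∑ i, (bary a i - 1 / 3) ^ 2 := by
    rw [mul_pow, div_pow, Real.sq_sqrt (by norm_num), norm_sub_centroid_sq]
    ring
  have hdev₂ : ∫ x, deviation a x ^ 2 ∂P = (2 / √3 * ‖a - centroid‖) ^ 2 / 4 := by
    rw [integral_deviation_sq hP, hs₂, norm_sub_centroid_sq]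
    ring
  have hmean : ∑ i, ∫ x, f (Smap i x) ∂P = 3 * ∫ x, f x ∂P := by
    rw [integral_eq_sum_div_three hP (integrable_of_mem_Icc hf hf₀₁)]
    ring
  have key := sq_two_mul_sum_add_sum_le (m := fun i => ∫ x, f (Smap i x) * deviation a x ∂P)
    (sum_bary_sub_third a) (by positivity) hs₂
    (fun i => integral_mem_Icc (P := P) (hfS i) fun x => hf₀₁ _) hmean
    (fun i => abs_integral_mul_le_of_integral_sq_le (hfS i).aemeasurable
      (.of_forall fun x => hf₀₁ _) hdev.1 (integral_deviation hP a)
      ((ae_bary_nonneg hP).mono fun x hx => abs_deviation_le a hx) hdev₂.le)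
    (fun i => hdev₂ ▸ sq_integral_mul_le (hfS i).aemeasurable (.of_forall fun x => hf₀₁ _) hdev
      (integral_deviation hP a))
  rw [integral_mul_deviation hP hf hf₀₁, norm_sub_centroid_sq]
  linarith

lemma integral_sub_one_le_integral_mul (hP : IsSelfSimilar P Smap) (hf : Measurable f)
    (hf₀₁ : ∀ x, f x ∈ Set.Icc 0 1) (a : E2) :
    2 / 27 * (∫ x, f x ∂P - 1) ≤ ∫ x, f x * (‖x - a‖ ^ 2 - ‖x - centroid‖ ^ 2) ∂P := by
  have hsplit : ∫ x, f x * (‖x - a‖ ^ 2 - ‖x - centroid‖ ^ 2) ∂P =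
      ‖a - centroid‖ ^ 2 * ∫ x, f x ∂P - ∫ x, f x * deviation a x ∂P := by
    simp only [norm_sub_sq_sub_eq, mul_sub]
    rw [integral_sub ((integrable_of_mem_Icc hf hf₀₁).mul_const _)
      (integrable_mul_of_continuous hP hf hf₀₁ (continuous_deviation a)), integral_mul_const,
      mul_comm]
  obtain ⟨hp₀, hp₁⟩ := integral_mem_Icc (P := P) hf hf₀₁
  have : 0 ≤ 1 - ∫ x, f x ∂P := sub_nonneg.2 hp₁
  have amgm : |∫ x, f x * deviation a x ∂P| ≤
      ‖a - centroid‖ ^ 2 * ∫ x, f x ∂P + 2 / 27 * (1 - ∫ x, f x ∂P) := by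
    refine abs_le_of_sq_le_sq ((sq_integral_mul_deviation_le hP hf hf₀₁ a).trans ?_)
      (by positivity)
    linarith [sq_nonneg (‖a - centroid‖ ^ 2 * ∫ x, f x ∂P - 2 / 27 * (1 - ∫ x, f x ∂P))]
  linarith [le_abs_self (∫ x, f x * deviation a x ∂P)]

lemma integral_sub_half_le_integral_mul (hP : IsSelfSimilar P Smap) (hf : Measurable f)
    (hf₀₁ : ∀ x, f x ∈ Set.Icc 0 1) {a : E2} (ha : ¬ ∀ i j, bary a i - bary a j < 8 / 5) :
    2 / 27 * (∫ x, f x ∂P - 1 / 2) ≤ ∫ x, f x * (‖x - a‖ ^ 2 - ‖x - centroid‖ ^ 2) ∂P := by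
  obtain ⟨j, hj, hne⟩ := exists_le_vertexExcess (sum_bary a) ha
  have pointwise {x : E2} (hx : ∀ i, 0 ≤ bary x i) :
      2 / 27 * f x - 1 / 3 * max (3 * bary x j - 2) 0 ≤
        f x * (‖x - a‖ ^ 2 - ‖x - centroid‖ ^ 2) := by
    have hsum := sum_mul_le_mul_max (l := fun i => 1 - 27 / 2 * vertexExcess (bary a) i) hx
      (sum_bary x) (K := 9 / 2) (by norm_num) (j := j) (by linarith) fun k hk => by
        constructor <;> linarith [hne k hk]
    simp only [mul_sub, mul_one, Finset.sum_sub_distrib, sum_bary, mul_left_comm (bary x _),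
      ← Finset.mul_sum, ← norm_sub_sq_sub_eq_sum] at hsum
    have hmul := mul_le_mul_of_nonneg_left hsum (hf₀₁ x).1
    have hle := mul_le_of_le_one_left (le_max_right (3 * bary x j - 2) 0) (hf₀₁ x).2
    linarith
  have hmono := integral_mono_ae
    (((integrable_of_mem_Icc hf hf₀₁).const_mul (2 / 27)).sub
      (integrable_of_continuous hP (F := fun x => 1 / 3 * max (3 * bary x j - 2) 0) (by fun_prop)))
    (integrable_mul_of_continuous hP hf hf₀₁
      (F := fun x => ‖x - a‖ ^ 2 - ‖x - centroid‖ ^ 2) (by fun_prop))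
    ((ae_bary_nonneg hP).mono fun x hx => pointwise hx)
  simp only [Pi.sub_apply] at hmono
  rw [integral_sub ((integrable_of_mem_Icc hf hf₀₁).const_mul _)
    (integrable_of_continuous hP (by fun_prop)), integral_const_mul, integral_const_mul,
    integral_max_bary hP] at hmono
  linarith

lemma integral_le_integral_mul (hP : IsSelfSimilar P Smap) (hf : Measurable f)
    (hf₀₁ : ∀ x, f x ∈ Set.Icc 0 1) {a : E2} (ha : charge (bary a) = 0) :
    2 / 27 * ∫ x, f x ∂P ≤ ∫ x, f x * (‖x - a‖ ^ 2 - ‖x - centroid‖ ^ 2) ∂P := by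
  rw [mul_comm, ← integral_mul_const]
  refine integral_mono_ae ((integrable_of_mem_Icc hf hf₀₁).mul_const _)
    (integrable_mul_of_continuous hP hf hf₀₁ (by fun_prop)) ?_
  filter_upwards [ae_bary_nonneg hP] with x hx
  gcongr
  · exact (hf₀₁ x).1
  calc (2 / 27 : ℝ) = ∑ i, bary x i * (2 / 27) := by rw [← Finset.sum_mul, sum_bary, one_mul]
    _ ≤ ∑ i, bary x i * vertexExcess (bary a) i := by
        gcongr with i
        · exact hx i
        · exact le_vertexExcess_of_charge_eq_zero (sum_bary a) ha i
    _ = ‖x - a‖ ^ 2 - ‖x - centroid‖ ^ 2 := (norm_sub_sq_sub_eq_sum x a).symm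

lemma integral_sub_charge_le_integral_mul (hP : IsSelfSimilar P Smap) (hf : Measurable f)
    (hf₀₁ : ∀ x, f x ∈ Set.Icc 0 1) (a : E2) :
    2 / 27 * (∫ x, f x ∂P - charge (bary a)) ≤
      ∫ x, f x * (‖x - a‖ ^ 2 - ‖x - centroid‖ ^ 2) ∂P := by
  unfold charge
  split_ifs with hnear hmid
  · exact integral_sub_one_le_integral_mul hP hf hf₀₁ a
  · exact integral_sub_half_le_integral_mul hP hf hf₀₁ hnear
  · have ha : charge (bary a) = 0 := by rw [charge, if_neg hnear, if_neg hmid]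
    rw [sub_zero]
    exact integral_le_integral_mul hP hf hf₀₁ ha

end PointInequality

section InfDist

open Metric

variable {X : Type*} [PseudoMetricSpace X]

lemma infDist_image_of_dist_eq {Y : Type*} [PseudoMetricSpace Y] {g : X → Y} {r : ℝ}
    (hr : 0 ≤ r) (hg : ∀ x y, dist (g x) (g y) = r * dist x y) (x : X) (s : Set X) :
    infDist (g x) (g '' s) = r * infDist x s := by
  rw [infDist_eq_iInf, infDist_eq_iInf, Real.mul_iInf_of_nonneg hr,
    ← (Set.imageFactorization_surjective (f := g) (s := s)).iInf_comp]
  exact iInf_congr fun y => hg x y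

lemma exists_weights_mul_dist_eq {ι : Type*} [Fintype ι] [Nonempty ι] [MeasurableSpace X]
    [OpensMeasurableSpace X] (a : ι → X) :
    ∃ f : ι → X → ℝ, (∀ j, Measurable (f j)) ∧ (∀ j x, f j x ∈ Set.Icc 0 1) ∧
      (∀ x, ∑ j, f j x = 1) ∧
      ∀ j x, f j x * dist x (a j) = f j x * infDist x (Set.range a) := by
  let V (j : ι) : Set X := {x | dist x (a j) = infDist x (Set.range a)}
  have measurableSet_V (j : ι) : MeasurableSet (V j) :=
    (isClosed_eq (by fun_prop) (continuous_infDist_pt _)).measurableSet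
  let count (x : X) : ℝ := ∑ k, (V k).indicator 1 x
  have indicator_nonneg (j : ι) (x : X) : 0 ≤ (V j).indicator (1 : X → ℝ) x :=
    Set.indicator_nonneg (fun _ _ => zero_le_one) x
  have indicator_le_count (j : ι) (x : X) : (V j).indicator 1 x ≤ count x :=
    Finset.single_le_sum (fun k _ => indicator_nonneg k x) (Finset.mem_univ j)
  have count_pos (x : X) : 0 < count x := by
    obtain ⟨_, ⟨j, rfl⟩, hj⟩ :=
      (Set.finite_range a).isCompact.exists_infDist_eq_dist (Set.range_nonempty a) x
    refine lt_of_lt_of_le ?_ (indicator_le_count j x)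
    rw [Set.indicator_of_mem (show x ∈ V j from hj.symm), Pi.one_apply]
    exact one_pos
  refine ⟨fun j x => (V j).indicator 1 x / count x, fun j => ?_, fun j x => ?_, fun x => ?_,
    fun j x => ?_⟩
  · exact (measurable_one.indicator (measurableSet_V j)).div
      (Finset.measurable_sum _ fun k _ => measurable_one.indicator (measurableSet_V k))
  · exact ⟨div_nonneg (indicator_nonneg j x) (count_pos x).le,
      (div_le_one (count_pos x)).2 (indicator_le_count j x)⟩
  · rw [← Finset.sum_div, div_self (count_pos x).ne']
  · by_cases hx : x ∈ V j
    · rw [show dist x (a j) = infDist x (Set.range a) from hx]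
    · simp only [Set.indicator_of_notMem hx, zero_div, zero_mul]

end InfDist

section Distortion

open Metric

/-- The real-valued form of `err`, in terms of the distance to the set `α`. Since
`Metric.infDist x ∅ = 0`, it is meaningful only for nonempty `α`. -/
def distortion (P : Measure E2) (α : Set E2) : ℝ := ∫ x, infDist x α ^ 2 ∂P

variable {P : Measure E2} [IsProbabilityMeasure P]

lemma continuous_infDist_sq (α : Set E2) : Continuous fun x => infDist x α ^ 2 :=
  (continuous_infDist_pt α).pow 2

lemma distortion_singleton (hP : IsSelfSimilar P Smap) (a : E2) :
    distortion P {a} = 1 / 6 + ‖a - centroid‖ ^ 2 := by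
  simp only [distortion, infDist_singleton, dist_eq_norm, integral_norm_sub_sq hP]

lemma distortion_anti (hP : IsSelfSimilar P Smap) {α β : Set E2} (hα : α.Nonempty)
    (hαβ : α ⊆ β) : distortion P β ≤ distortion P α :=
  integral_mono (integrable_of_continuous hP (continuous_infDist_sq β))
    (integrable_of_continuous hP (continuous_infDist_sq α)) fun _ =>
    pow_le_pow_left₀ infDist_nonneg (infDist_le_infDist_of_subset hαβ hα) 2

lemma distortion_eq_sum_expand (hP : IsSelfSimilar P Smap) (α : Set E2) :
    distortion P α = (∑ i, distortion P (expand i '' α)) / 27 := by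
  have infDist_Smap (i : Fin 3) (x : E2) :
      infDist (Smap i x) α ^ 2 = 1 / 9 * infDist x (expand i '' α) ^ 2 := by
    have hα : α = Smap i '' (expand i '' α) := by simp [Set.image_image, Smap_expand]
    conv_lhs => rw [hα, infDist_image_of_dist_eq (by norm_num) (dist_Smap i)]
    ring
  rw [distortion, integral_eq_sum_div_three hP
    (integrable_of_continuous hP (continuous_infDist_sq α))]
  simp only [infDist_Smap, integral_const_mul, ← Finset.mul_sum, distortion]
  ring

lemma distortion_iUnion_Smap_le (hP : IsSelfSimilar P Smap) {α : Fin 3 → Set E2}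
    (hα : ∀ i, (α i).Nonempty) :
    distortion P (⋃ i, Smap i '' α i) ≤ (∑ i, distortion P (α i)) / 27 := by
  rw [distortion_eq_sum_expand hP]
  gcongr with i
  refine distortion_anti hP (hα i) fun x hx => ⟨Smap i x, ?_, expand_Smap i x⟩
  exact Set.mem_iUnion_of_mem i (Set.mem_image_of_mem _ hx)

section LowerBound

variable {ι : Type*} [Fintype ι] [Nonempty ι]

lemma le_distortion_add_sum_charge (hP : IsSelfSimilar P Smap) (a : ι → E2) :
    13 / 54 ≤ distortion P (Set.range a) + 2 / 27 * ∑ j, charge (bary (a j)) := by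
  obtain ⟨f, hf, hf₀₁, hf_sum, hf_dist⟩ := exists_weights_mul_dist_eq a
  have hint (j : ι) := integrable_mul_of_continuous hP (hf j) (hf₀₁ j)
    (F := fun x => ‖x - a j‖ ^ 2 - ‖x - centroid‖ ^ 2) (by fun_prop)
  have hsplit (x : E2) : infDist x (Set.range a) ^ 2 =
      ‖x - centroid‖ ^ 2 + ∑ j, f j x * (‖x - a j‖ ^ 2 - ‖x - centroid‖ ^ 2) := by
    have hterm (j : ι) : f j x * ‖x - a j‖ ^ 2 = f j x * infDist x (Set.range a) ^ 2 := by
      rw [← dist_eq_norm, sq, sq, ← mul_assoc, hf_dist, mul_right_comm, hf_dist, mul_right_comm,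
        mul_assoc]
    simp only [mul_sub, Finset.sum_sub_distrib, hterm, ← Finset.sum_mul, hf_sum, one_mul,
      add_sub_cancel]
  have hmass : ∑ j, ∫ x, f j x ∂P = 1 := by
    rw [← integral_finsetSum _ fun j _ => integrable_of_mem_Icc (hf j) (hf₀₁ j)]
    simp only [hf_sum, integral_const, probReal_univ, one_smul]
  calc (13 / 54 : ℝ)
      = 1 / 6 + ∑ j, 2 / 27 * (∫ x, f j x ∂P - charge (bary (a j))) +
          2 / 27 * ∑ j, charge (bary (a j)) := by
        rw [← Finset.mul_sum, Finset.sum_sub_distrib, hmass]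
        ring
    _ ≤ 1 / 6 + ∑ j, ∫ x, f j x * (‖x - a j‖ ^ 2 - ‖x - centroid‖ ^ 2) ∂P +
          2 / 27 * ∑ j, charge (bary (a j)) := by
        gcongr with j
        exact integral_sub_charge_le_integral_mul hP (hf j) (hf₀₁ j) (a j)
    _ = distortion P (Set.range a) + 2 / 27 * ∑ j, charge (bary (a j)) := by
        simp only [distortion, hsplit]
        rw [integral_add (integrable_of_continuous hP (by fun_prop))
          (integrable_finsetSum _ fun j _ => hint j), integral_finsetSum _ fun j _ => hint j,
          integral_norm_sub_centroid_sq hP]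

lemma le_distortion_add_sum_charge_pow (hP : IsSelfSimilar P Smap) (l : ℕ) (a : ι → E2) :
    13 / 2 * 3 ^ l / 27 ^ (l + 1) ≤
      distortion P (Set.range a) + 2 / 27 ^ (l + 1) * ∑ j, charge (bary (a j)) := by
  induction l generalizing a with
  | zero => simpa using (by norm_num : _ ≤ _).trans (le_distortion_add_sum_charge hP a)
  | succ l ih =>
    have hcharge : ∑ i, ∑ j, charge (bary (expand i (a j))) ≤ ∑ j, charge (bary (a j)) := by
      rw [Finset.sum_comm]
      gcongr with j
      simp only [bary_expand]
      exact sum_charge_expandCoord_le (sum_bary _)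
    calc 13 / 2 * 3 ^ (l + 1) / 27 ^ (l + 1 + 1)
        = (∑ i : Fin 3, (13 / 2 * 3 ^ l / 27 ^ (l + 1) : ℝ)) / 27 := by
          rw [Finset.sum_const, Finset.card_univ, Fintype.card_fin, nsmul_eq_mul]
          ring
      _ ≤ (∑ i, (distortion P (Set.range fun j => expand i (a j)) +
            2 / 27 ^ (l + 1) * ∑ j, charge (bary (expand i (a j))))) / 27 := by
          gcongr with i
          exact ih fun j => expand i (a j)
      _ = distortion P (Set.range a) +
            2 / 27 ^ (l + 1 + 1) * ∑ i, ∑ j, charge (bary (expand i (a j))) := by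
          rw [distortion_eq_sum_expand hP (Set.range a), Finset.sum_add_distrib, ← Finset.mul_sum]
          simp only [← Set.range_comp, Function.comp_def]
          ring
      _ ≤ distortion P (Set.range a) + 2 / 27 ^ (l + 1 + 1) * ∑ j, charge (bary (a j)) := by
          gcongr

end LowerBound

lemma le_distortion_of_finite (hP : IsSelfSimilar P Smap) {α : Set E2} (hα : α.Finite)
    (hne : α.Nonempty) {n : ℕ} (hn : α.ncard ≤ n) (l : ℕ) :
    1 / 2 * (1 / 27 ^ (l + 1)) * (13 * 3 ^ l - 4 * (n : ℝ)) ≤ distortion P α := by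
  have := hα.fintype
  have := hne.to_subtype
  have hcharge : ∑ a : α, charge (bary a) ≤ n := by
    calc ∑ a : α, charge (bary a) ≤ ∑ _a : α, (1 : ℝ) :=
          Finset.sum_le_sum fun a _ => charge_le_one _
      _ = α.ncard := by simp [Set.fintypeCard_eq_ncard]
      _ ≤ n := by exact_mod_cast hn
  have hlower := le_distortion_add_sum_charge_pow hP l (Subtype.val : α → E2)
  rw [Subtype.range_coe] at hlower
  calc 1 / 2 * (1 / 27 ^ (l + 1)) * (13 * 3 ^ l - 4 * (n : ℝ))
      = 13 / 2 * 3 ^ l / 27 ^ (l + 1) - 2 / 27 ^ (l + 1) * n := by ring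
    _ ≤ 13 / 2 * 3 ^ l / 27 ^ (l + 1) - 2 / 27 ^ (l + 1) * ∑ a : α, charge (bary a) := by
        gcongr
    _ ≤ distortion P α := sub_le_iff_le_add.2 hlower

section UpperBound

lemma exists_distortion_le_of_parts (hP : IsSelfSimilar P Smap) {m : Fin 3 → ℕ} {d : Fin 3 → ℝ}
    (h : ∀ i, ∃ α : Finset E2, α.Nonempty ∧ α.card ≤ m i ∧ distortion P α ≤ d i) :
    ∃ α : Finset E2, α.Nonempty ∧ α.card ≤ ∑ i, m i ∧ distortion P α ≤ (∑ i, d i) / 27 := by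
  classical
  choose α hne hcard hdist using h
  refine ⟨Finset.univ.biUnion fun i => (α i).image (Smap i), ?_, ?_, ?_⟩
  · exact Finset.univ_nonempty.biUnion fun i _ => (hne i).image _
  · exact Finset.card_biUnion_le.trans
      (Finset.sum_le_sum fun i _ => Finset.card_image_le.trans (hcard i))
  · have hunion : ((Finset.univ.biUnion fun i => (α i).image (Smap i) : Finset E2) : Set E2) =
        ⋃ i, Smap i '' α i := by simp
    rw [hunion]
    refine (distortion_iUnion_Smap_le hP fun i => hne i).trans ?_
    gcongr with i
    exact hdist i

lemma exists_distortion_le_of_card_one (hP : IsSelfSimilar P Smap) :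
    ∃ α : Finset E2, α.Nonempty ∧ α.card ≤ 1 ∧ distortion P α ≤ 1 / 6 :=
  ⟨{centroid}, Finset.singleton_nonempty _, le_rfl, by simp [distortion_singleton hP]⟩

/-- The two points are the centroid of one cell of level one and the midpoint of the centroids of
the other two. -/
lemma exists_distortion_le_of_card_two (hP : IsSelfSimilar P Smap) :
    ∃ α : Finset E2, α.Nonempty ∧ α.card ≤ 2 ∧ distortion P α ≤ 5 / 54 := by
  classical
  let u : E2 := vertex 1 - vertex 0
  let b : Fin 3 → E2 := ![centroid + u, centroid - u, centroid]
  have norm_u : ‖u‖ ^ 2 = 1 := by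
    rw [norm_sub_sq_eq, bary_vertex, bary_vertex, Fin.sum_univ_three]
    norm_num [Pi.single_apply, Fin.ext_iff]
  have hmid : Smap 0 (b 0) = Smap 1 (b 1) := by
    simp only [Smap_eq_homothety, AffineMap.homothety_apply, b, u, Matrix.cons_val, vsub_eq_sub,
      vadd_eq_add]
    module
  have hunion : ⋃ i, Smap i '' {b i} = ({Smap 1 (b 1), Smap 2 (b 2)} : Finset E2) := by
    ext x
    simp [Fin.exists_fin_succ, hmid, eq_comm]
  refine ⟨{Smap 1 (b 1), Smap 2 (b 2)}, Finset.insert_nonempty _ _, Finset.card_le_two, ?_⟩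
  rw [← hunion]
  refine (distortion_iUnion_Smap_le hP fun i => Set.singleton_nonempty _).trans ?_
  simp only [distortion_singleton hP, Fin.sum_univ_three, b, Matrix.cons_val, add_sub_cancel_left,
    sub_sub_cancel_left, norm_neg, norm_u, sub_self, norm_zero]
  norm_num

lemma exists_distortion_le (hP : IsSelfSimilar P Smap) (l : ℕ) {n : ℕ} (h₁ : 3 ^ l ≤ n)
    (h₂ : n ≤ 3 ^ (l + 1)) :
    ∃ α : Finset E2, α.Nonempty ∧ α.card ≤ n ∧
      distortion P α ≤ 1 / 2 * (1 / 27 ^ (l + 1)) * (13 * 3 ^ l - 4 * (n : ℝ)) := by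
  induction l generalizing n with
  | zero =>
    obtain rfl | rfl | rfl : n = 1 ∨ n = 2 ∨ n = 3 := by omega
    · convert exists_distortion_le_of_card_one hP using 5
      norm_num
    · convert exists_distortion_le_of_card_two hP using 5
      norm_num
    · convert exists_distortion_le_of_parts hP fun _ => exists_distortion_le_of_card_one hP using 5
      · rfl
      · norm_num [Fin.sum_univ_three]
  | succ l ih =>
    let m : Fin 3 → ℕ := ![n / 3, (n + 1) / 3, (n + 2) / 3]
    have hm : ∑ i, m i = n := by
      simp only [m, Fin.sum_univ_three, Matrix.cons_val]
      omega
    have hm_mem (i : Fin 3) : 3 ^ l ≤ m i ∧ m i ≤ 3 ^ (l + 1) := by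
      fin_cases i <;> simp only [m, Fin.reduceFinMk, Matrix.cons_val] <;> omega
    convert exists_distortion_le_of_parts hP fun i => ih (hm_mem i).1 (hm_mem i).2 using 5
    · exact hm.symm
    · rw [← Finset.mul_sum, Finset.sum_sub_distrib, ← Finset.mul_sum Finset.univ fun i => (m i : ℝ),
        ← Nat.cast_sum, hm]
      simp only [Finset.sum_const, Finset.card_univ, Fintype.card_fin, nsmul_eq_mul]
      ring

end UpperBound

lemma err_eq_ofReal_distortion (hP : IsSelfSimilar P Smap) {α : Set E2} (hα : IsCompact α)
    (hne : α.Nonempty) : err P α = ENNReal.ofReal (distortion P α) := by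
  have iInf_eq (x : E2) :
      ⨅ a ∈ α, ENNReal.ofReal (‖x - a‖ ^ 2) = ENNReal.ofReal (infDist x α ^ 2) := by
    obtain ⟨a, ha, hdist⟩ := hα.exists_infDist_eq_dist hne x
    refine le_antisymm (iInf₂_le_of_le a ha (by rw [hdist, dist_eq_norm])) ?_
    exact le_iInf₂ fun b hb => ENNReal.ofReal_le_ofReal
      (pow_le_pow_left₀ infDist_nonneg (dist_eq_norm x b ▸ infDist_le_dist_of_mem hb) 2)
  simp only [err, distortion, iInf_eq]
  exact (ofReal_integral_eq_lintegral_ofReal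
    (integrable_of_continuous hP (continuous_infDist_sq α))
    (.of_forall fun x => sq_nonneg (infDist x α))).symm

lemma err_empty : err P ∅ = ⊤ := by
  simp [err]

end Distortion

lemma isSelfSimilar_Smap {P : Measure E2}
    (hP : P = (3 : ℝ≥0∞)⁻¹ • (P.map S1 + P.map S2 + P.map S3)) : IsSelfSimilar P Smap := by
  simpa [IsSelfSimilar, Fin.sum_univ_three, Smap] using hP

theorem stmt_16_general (P : Measure E2) [IsProbabilityMeasure P]
    (hP : P = (3 : ℝ≥0∞)⁻¹ • (P.map S1 + P.map S2 + P.map S3))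
    (n ℓ : ℕ) (h1 : 3 ^ ℓ ≤ n) (h2 : n ≤ 3 ^ (ℓ + 1)) :
    quantErr P n
      = ENNReal.ofReal
          ((1 / 2) * (1 / 27 ^ (ℓ + 1)) * (13 * 3 ^ ℓ - 4 * (n : ℝ))) := by
  have hS := isSelfSimilar_Smap hP
  refine le_antisymm ?_ (le_iInf₂ fun α hα => ?_)
  · obtain ⟨α, hne, hcard, hdist⟩ := exists_distortion_le hS ℓ h1 h2
    refine iInf₂_le_of_le (α : Set E2) ⟨α.finite_toSet, by rwa [Set.ncard_coe_finset]⟩ ?_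
    rw [err_eq_ofReal_distortion hS α.finite_toSet.isCompact hne]
    exact ENNReal.ofReal_le_ofReal hdist
  · obtain rfl | hne := α.eq_empty_or_nonempty
    · exact (err_empty (P := P)).symm ▸ le_top
    · rw [err_eq_ofReal_distortion hS hα.1.isCompact hne]
      exact ENNReal.ofReal_le_ofReal (le_distortion_of_finite hS hα.1 hne hα.2 ℓ)

/-- For every n ≥ 3, with ℓ(n) the unique natural number satisfying 3^ℓ ≤ n < 3^{ℓ+1},
the n-th quantization error of the R-measure P is
V_n(P) = (1/2)·(1/27^{ℓ+1})·(13·3^ℓ − 4n). -/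
theorem stmt_16 (P : Measure E2) [IsProbabilityMeasure P]
    (hP : P = (3 : ℝ≥0∞)⁻¹ • (P.map S1 + P.map S2 + P.map S3))
    (n : ℕ) (hn : 3 ≤ n) (ℓ : ℕ) (h1 : 3 ^ ℓ ≤ n) (h2 : n < 3 ^ (ℓ + 1)) :
    quantErr P n
      = ENNReal.ofReal
          ((1 / 2) * (1 / 27 ^ (ℓ + 1)) * (13 * 3 ^ ℓ - 4 * (n : ℝ))) :=
  stmt_16_general P hP n ℓ h1 h2.le

end
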